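/- Consider the first-order analytic system ∂u/∂x1 = f(x1,x2,u), ∂u/∂x2 = g(x1,x2,u), where f, g are analytic near (0,0,0) and satisfy the compatibility condition D₂f = D₁g with D₁ = ∂/∂x1 + f·∂/∂u, D₂ = ∂/∂x2 + g·∂/∂u. Then there exists a unique function u(x1,x2) analytic near (0,0) with u(0,0) = 0 solving the system. -/

import Mathlib

noncomputable def d1 (f : ℝ → ℝ → ℝ) : ℝ → ℝ → ℝ := fun x y => deriv (fun t => f t y) x
noncomputable def d2 (f : ℝ → ℝ → ℝ) : ℝ → ℝ → ℝ := fun x y => deriv (fun t => f x t) y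

noncomputable def D1 (h : ℝ → ℝ → ℝ → ℝ) : ℝ → ℝ → ℝ → ℝ :=
  fun x y u => deriv (fun t => h t y u) x
noncomputable def D2 (h : ℝ → ℝ → ℝ → ℝ) : ℝ → ℝ → ℝ → ℝ :=
  fun x y u => deriv (fun t => h x t u) y
noncomputable def Du (h : ℝ → ℝ → ℝ → ℝ) : ℝ → ℝ → ℝ → ℝ :=
  fun x y u => deriv (fun t => h x y t) u

/-!
Write the system as a total differential equation `du = η (q, u)` on a Banach space. Along the
segment from `0` to `q` it becomes an ordinary differential equation on `[0, 1]`, and since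
superposition with an analytic map is an analytic operator on spaces of continuous curves, the
implicit function theorem yields a unique small solution, analytic in `q`. Rescaling the segments
shows that its value at time `1` is an analytic `u` solving the equation in the radial direction;
any solution of the full equation restricts to segments, hence agrees with `u`. Integrability
enters last: it makes `t ↦ t • (du - η (·, u)) (t • q) v` solve a homogeneous linear equation, and
this curve vanishes at `t = 0`, so by Grönwall's inequality `du = η (q, u)`.
-/

open Set Filter Topology unitInterval
open scoped ContDiff

section Superposition

variable {𝕜 X E F : Type*} [NontriviallyNormedField 𝕜] [TopologicalSpace X] [CompactSpace X]
  [NormedAddCommGroup E] [NormedSpace 𝕜 E] [NormedAddCommGroup F] [NormedSpace 𝕜 F]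

theorem continuousMap_update_apply {ι Y Z : Type*} [TopologicalSpace Y] [TopologicalSpace Z]
    [DecidableEq ι] (c : ι → C(Y, Z)) (i : ι) (d : C(Y, Z)) (y : Y) :
    (fun j => Function.update c i d j y) = Function.update (fun j => c j y) i (d y) :=
  funext fun j => Function.apply_update (fun _ (k : C(Y, Z)) => k y) c i d j

/-- The pointwise extension of a continuous multilinear map to spaces of continuous functions. -/
noncomputable def pointwiseMultilinear {ι : Type*} [Fintype ι]
    (m : ContinuousMultilinearMap 𝕜 (fun _ : ι => E) F) :
    ContinuousMultilinearMap 𝕜 (fun _ : ι => C(X, E)) C(X, F) :=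
  MultilinearMap.mkContinuous
    { toFun := fun c => ⟨fun x => m fun i => c i x, by fun_prop⟩
      map_update_add' := by
        intro _ c i a b
        ext x
        simp [continuousMap_update_apply]
      map_update_smul' := by
        intro _ c i a b
        ext x
        simp [continuousMap_update_apply] } ‖m‖ fun c =>
    (ContinuousMap.norm_le _ (by positivity)).2 fun x => (m.le_opNorm _).trans <| by
      gcongr with i
      exact (c i).norm_coe_le_norm x

@[simp]
theorem pointwiseMultilinear_apply {ι : Type*} [Fintype ι]
    (m : ContinuousMultilinearMap 𝕜 (fun _ : ι => E) F) (c : ι → C(X, E)) (x : X) :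
    pointwiseMultilinear m c x = m fun i => c i x := rfl

theorem norm_pointwiseMultilinear_le {ι : Type*} [Fintype ι]
    (m : ContinuousMultilinearMap 𝕜 (fun _ : ι => E) F) :
    ‖(pointwiseMultilinear m : ContinuousMultilinearMap 𝕜 (fun _ : ι => C(X, E)) C(X, F))‖ ≤ ‖m‖ :=
  MultilinearMap.mkContinuous_norm_le _ (norm_nonneg _) _

theorem exists_analyticAt_superposition [CompleteSpace F] {f : E → F} {a : E}
    (hf : AnalyticAt 𝕜 f a) :
    ∃ N : C(X, E) → C(X, F), AnalyticAt 𝕜 N (ContinuousMap.const X a) ∧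
      ∀ᶠ c in 𝓝 (ContinuousMap.const X a), ∀ x, N c x = f (c x) := by
  obtain ⟨p, r, hp⟩ := hf
  let P : FormalMultilinearSeries 𝕜 C(X, E) C(X, F) := fun n => pointwiseMultilinear (p n)
  have hrP : r ≤ P.radius :=
    hp.r_le.trans <| FormalMultilinearSeries.radius_le_of_le fun n =>
      norm_pointwiseMultilinear_le (p n)
  have hP := P.hasFPowerSeriesOnBall (hp.r_pos.trans_le hrP)
  refine ⟨fun c => P.sum (c - ContinuousMap.const X a), ?_, ?_⟩
  · simpa using (hP.comp_sub (ContinuousMap.const X a)).analyticAt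
  filter_upwards [Metric.eball_mem_nhds (ContinuousMap.const X a) hp.r_pos] with c hc x
  have hca : c - ContinuousMap.const X a ∈ Metric.eball (0 : C(X, E)) r := by
    simpa [edist_eq_enorm_sub] using hc
  have hcx : c x - a ∈ Metric.eball (0 : E) r := by
    rw [mem_eball_zero_iff] at hca ⊢
    have hnorm : ‖c x - a‖ ≤ ‖c - ContinuousMap.const X a‖ :=
      (c - ContinuousMap.const X a).norm_coe_le_norm x
    exact (enorm_le_iff_norm_le.2 hnorm).trans_lt hca
  have hsum := (hP.hasSum (Metric.eball_subset_eball hrP hca)).mapL (ContinuousMap.evalCLM 𝕜 x)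
  rw [zero_add] at hsum
  simpa using hsum.unique (hp.hasSum hcx)

end Superposition

section Primitive

variable {𝕜 F : Type*} [NontriviallyNormedField 𝕜] [NormedAddCommGroup F] [NormedSpace ℝ F]
  [NormedSpace 𝕜 F] [SMulCommClass ℝ 𝕜 F]

variable (𝕜) in
/-- The primitive vanishing at `0`, as an operator on continuous functions on `[0, 1]`. -/
noncomputable def primitiveCLM : C(I, F) →L[𝕜] C(I, F) :=
  LinearMap.mkContinuous
    { toFun := fun k => ⟨fun t => ∫ s in (0 : ℝ)..t, IccExtend zero_le_one k s,
        (intervalIntegral.continuous_primitive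
          (fun _ _ => k.continuous.Icc_extend'.intervalIntegrable _ _) 0).comp
            continuous_subtype_val⟩
      map_add' := by
        intro k l
        ext t
        exact intervalIntegral.integral_add (k.continuous.Icc_extend'.intervalIntegrable _ _)
          (l.continuous.Icc_extend'.intervalIntegrable _ _)
      map_smul' := by
        intro r k
        ext t
        exact intervalIntegral.integral_smul r _ } 1 fun k => by
      rw [one_mul]
      refine (ContinuousMap.norm_le _ (norm_nonneg _)).2 fun t => ?_
      refine (intervalIntegral.norm_integral_le_of_norm_le_const
        (C := ‖k‖) fun s _ => k.norm_coe_le_norm _).trans ?_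
      rw [sub_zero, abs_of_nonneg t.2.1]
      exact mul_le_of_le_one_right (norm_nonneg _) t.2.2

@[simp]
theorem primitiveCLM_apply (k : C(I, F)) (t : I) :
    primitiveCLM 𝕜 k t = ∫ s in (0 : ℝ)..t, IccExtend zero_le_one k s := rfl

theorem eq_primitiveCLM_iff [CompleteSpace F] {c k : C(I, F)} :
    c = primitiveCLM 𝕜 k ↔ IccExtend zero_le_one c 0 = 0 ∧
      ∀ t ∈ I, HasDerivWithinAt (IccExtend zero_le_one c) (IccExtend zero_le_one k t) I t := by
  have hk : Continuous (IccExtend zero_le_one k) := k.continuous.Icc_extend'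
  constructor
  · rintro rfl
    have hprim : ∀ t ∈ I, IccExtend zero_le_one (primitiveCLM 𝕜 k) t =
        ∫ s in (0 : ℝ)..t, IccExtend zero_le_one k s := fun t ht => IccExtend_of_mem _ _ ht
    exact ⟨by simp, fun t ht =>
      (hk.integral_hasStrictDerivAt 0 t).hasDerivAt.hasDerivWithinAt.congr hprim (hprim t ht)⟩
  · rintro ⟨hc0, hc⟩
    ext t
    have hderiv : ∀ s ∈ Ioo 0 (t : ℝ), HasDerivAt (IccExtend zero_le_one c)
        (IccExtend zero_le_one k s) s := fun s hs =>
      (hc s ⟨hs.1.le, hs.2.le.trans t.2.2⟩).hasDerivAt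
        (Icc_mem_nhds hs.1 (hs.2.trans_le t.2.2))
    rw [primitiveCLM_apply, intervalIntegral.integral_eq_sub_of_hasDerivAt_of_le t.2.1
      c.continuous.Icc_extend'.continuousOn hderiv (hk.intervalIntegrable _ _), hc0, sub_zero,
      IccExtend_val]

end Primitive

section RayCurve

variable {𝕜 E F : Type*} [NontriviallyNormedField 𝕜]
  [NormedAddCommGroup E] [NormedSpace ℝ E] [NormedSpace 𝕜 E] [SMulCommClass ℝ 𝕜 E]
  [NormedAddCommGroup F] [NormedSpace 𝕜 F]

variable (𝕜 E F) in
/-- The operator sending `(q, c)` to the curve `t ↦ (q, t • q, c t)`. -/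
noncomputable def rayCLM : E × C(I, F) →L[𝕜] C(I, E × E × F) :=
  LinearMap.mkContinuous
    { toFun := fun w => ⟨fun t => (w.1, (t : ℝ) • w.1, w.2 t), by fun_prop⟩
      map_add' := by intro a b; ext t <;> simp
      map_smul' := by intro r a; ext t <;> simp [smul_comm (t : ℝ) r] } 1 fun w => by
      rw [one_mul]
      refine (ContinuousMap.norm_le _ (norm_nonneg _)).2 fun t => ?_
      refine norm_prod_le_iff.2 ⟨norm_fst_le w, norm_prod_le_iff.2 ⟨?_, ?_⟩⟩
      · refine (norm_smul_le _ _).trans ?_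
        rw [Real.norm_of_nonneg t.2.1]
        exact (mul_le_of_le_one_left (norm_nonneg _) t.2.2).trans (norm_fst_le w)
      · exact (w.2.norm_coe_le_norm t).trans (norm_snd_le w)

@[simp]
theorem rayCLM_apply (w : E × C(I, F)) (t : I) :
    rayCLM 𝕜 E F w t = (w.1, (t : ℝ) • w.1, w.2 t) := rfl

end RayCurve

section RaySolution

variable {𝕜 E F : Type*} [RCLike 𝕜]
  [NormedAddCommGroup E] [NormedSpace ℝ E] [NormedSpace 𝕜 E]
  [NormedAddCommGroup F] [NormedSpace ℝ F] [NormedSpace 𝕜 F]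

theorem eventually_forall_smul_of_eventually {P : E → Prop} (hP : ∀ᶠ q in 𝓝 0, P q) :
    ∀ᶠ q in 𝓝 (0 : E), ∀ t ∈ I, P (t • q) := by
  obtain ⟨δ, hδ, hball⟩ := Metric.eventually_nhds_iff_ball.1 hP
  filter_upwards [Metric.ball_mem_nhds 0 hδ] with q hq t ht
  exact hball _ ((balanced_ball_zero.smul_mem (by simpa [abs_of_nonneg ht.1] using ht.2) hq))

/-- The curve `c` solves on `[0, 1]` the restriction of `du = η (·, u)` to the segment from `0`
to `q`, with initial value `0`. -/
def IsRaySolution (η : E × F → E →L[𝕜] F) (q : E) (c : ℝ → F) : Prop :=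
  c 0 = 0 ∧ ∀ t ∈ I, HasDerivWithinAt c (η (t • q, c t) q) I t

namespace IsRaySolution

variable {η : E × F → E →L[𝕜] F} {q : E} {c d : ℝ → F}

theorem congr (h : IsRaySolution η q c) (hd : EqOn d c I) : IsRaySolution η q d := by
  refine ⟨(hd (left_mem_Icc.2 zero_le_one)).trans h.1, fun t ht => ?_⟩
  rw [hd ht]
  exact (h.2 t ht).congr hd (hd ht)

theorem comp_mul_left (h : IsRaySolution η q c) {t : ℝ} (ht : t ∈ I) :
    IsRaySolution η (t • q) fun s => c (t * s) := by
  refine ⟨by simpa using h.1, fun s hs => ?_⟩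
  have hts : MapsTo (fun s => t * s) I I := fun r hr => (⟨t, ht⟩ * ⟨r, hr⟩ : I).2
  have hmul : HasDerivWithinAt (fun s : ℝ => t * s) t I s := by
    simpa using (hasDerivWithinAt_id s I).const_mul t
  simpa [smul_smul, mul_comm, Function.comp_def] using (h.2 _ (hts hs)).scomp s hmul hts

end IsRaySolution

theorem hasDerivAt_comp_smul [IsScalarTower ℝ 𝕜 E] [IsScalarTower ℝ 𝕜 F] {f : E → F}
    {f' : E →L[𝕜] F} {q : E} {t : ℝ} (hf : HasFDerivAt f f' (t • q)) :
    HasDerivAt (fun s : ℝ => f (s • q)) (f' q) t := by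
  have hsmul : HasDerivAt (fun s : ℝ => s • q) q t := by
    simpa using (hasDerivAt_id t).smul_const q
  exact (hf.restrictScalars ℝ).comp_hasDerivAt t hsmul

theorem isRaySolution_of_hasFDerivAt [IsScalarTower ℝ 𝕜 E] [IsScalarTower ℝ 𝕜 F]
    {η : E × F → E →L[𝕜] F} {v : E → F} {q : E} (hv0 : v 0 = 0)
    (hv : ∀ t ∈ I, HasFDerivAt v (η (t • q, v (t • q))) (t • q)) :
    IsRaySolution η q fun t => v (t • q) :=
  ⟨by simpa using hv0, fun t ht => (hasDerivAt_comp_smul (hv t ht)).hasDerivWithinAt⟩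

/-- `ψ` sends each `q` near `0` to the only solution of small norm of the ray equation
towards `q`. -/
def IsLocalRayFlow (η : E × F → E →L[𝕜] F) (ψ : E → C(I, F)) : Prop :=
  ψ 0 = 0 ∧ ∃ ε > 0, ∀ᶠ q in 𝓝 0, ∀ c : C(I, F), ‖c‖ < ε →
    (IsRaySolution η q (IccExtend zero_le_one c) ↔ ψ q = c)

variable {η : E × F → E →L[𝕜] F}

namespace IsLocalRayFlow

variable {ψ : E → C(I, F)}

/-- The ray towards `t • q` is the ray towards `q` run at speed `t`, so by uniqueness
`ψ (t • q) 1 = ψ q t`. -/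
theorem eventually_isRaySolution (h : IsLocalRayFlow η ψ) (hψ : ContinuousAt ψ 0) :
    ∀ᶠ q in 𝓝 0, IsRaySolution η q fun t => ψ (t • q) 1 := by
  obtain ⟨hψ0, ε, hε, hiff⟩ := h
  have hψsmall : ∀ᶠ q in 𝓝 (0 : E), ‖ψ q‖ < ε :=
    hψ.norm.eventually_lt_const (by simpa [hψ0] using hε)
  filter_upwards [hiff, eventually_forall_smul_of_eventually hiff, hψsmall] with q hq hrayq hψq
  have hsol : IsRaySolution η q (IccExtend zero_le_one (ψ q)) := (hq _ hψq).2 rfl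
  refine hsol.congr fun t ht => ?_
  let c : C(I, F) := (ψ q).comp ⟨fun s => ⟨t, ht⟩ * s, by fun_prop⟩
  have hc : ‖c‖ < ε := lt_of_le_of_lt
    ((ContinuousMap.norm_le _ (norm_nonneg _)).2 fun s => (ψ q).norm_coe_le_norm _) hψq
  have hcsol : IsRaySolution η (t • q) (IccExtend zero_le_one c) := by
    refine (hsol.comp_mul_left ht).congr fun s hs => ?_
    rw [IccExtend_of_mem _ c hs]
    exact (IccExtend_val _ (ψ q) (⟨t, ht⟩ * ⟨s, hs⟩)).symm
  have hψc : ψ (t • q) = c := (hrayq t ht c hc).1 hcsol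
  simp [hψc, c, IccExtend_of_mem _ (ψ q) ht]

theorem eventuallyEq_of_hasFDerivAt [IsScalarTower ℝ 𝕜 E] [IsScalarTower ℝ 𝕜 F]
    (h : IsLocalRayFlow η ψ) {v : E → F} (hv0 : v 0 = 0)
    (hv : ∀ᶠ q in 𝓝 0, HasFDerivAt v (η (q, v q)) q) : ∀ᶠ q in 𝓝 0, v q = ψ q 1 := by
  obtain ⟨-, ε, hε, hiff⟩ := h
  have hvsmall : ∀ᶠ q in 𝓝 (0 : E), ‖v q‖ < ε / 2 :=
    hv.self_of_nhds.continuousAt.norm.eventually_lt_const (by simpa [hv0] using hε)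
  filter_upwards [hiff, eventually_forall_smul_of_eventually hvsmall,
    eventually_forall_smul_of_eventually hv] with q hq hvq hηq
  have hcont : Continuous fun s : I => v ((s : ℝ) • q) := continuous_iff_continuousAt.2 fun s =>
    ContinuousAt.comp (g := v) (f := fun s : I => (s : ℝ) • q) (hηq s s.2).continuousAt
      (by fun_prop)
  let c : C(I, F) := ⟨fun s => v ((s : ℝ) • q), hcont⟩
  have hc : ‖c‖ < ε := lt_of_le_of_lt
    ((ContinuousMap.norm_le _ (half_pos hε).le).2 fun s => (hvq s s.2).le) (half_lt_self hε)
  have hcsol : IsRaySolution η q (IccExtend zero_le_one c) :=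
    (isRaySolution_of_hasFDerivAt hv0 hηq).congr fun s hs => IccExtend_of_mem _ _ hs
  simp [(hq c hc).1 hcsol, c]

end IsLocalRayFlow

variable [IsScalarTower ℝ 𝕜 E] [IsScalarTower ℝ 𝕜 F] [CompleteSpace F]

theorem exists_analyticAt_rayEquation (hη : AnalyticAt 𝕜 η 0) :
    ∃ R : E × C(I, F) → C(I, F), AnalyticAt 𝕜 R 0 ∧ (∀ᶠ c in 𝓝 0, R (0, c) = c) ∧
      ∀ᶠ w in 𝓝 0, R w = 0 ↔ IsRaySolution η w.1 (IccExtend zero_le_one w.2) := by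
  have hΩ : AnalyticAt 𝕜 (fun z : E × E × F => η z.2 z.1) 0 :=
    ((ContinuousLinearMap.id 𝕜 (E →L[𝕜] F)).analyticAt_bilinear _).fun_comp <|
      (AnalyticAt.fun_comp (g := η) (f := fun z : E × E × F => z.2) hη analyticAt_snd).prod
        analyticAt_fst
  obtain ⟨N, hN, hNη⟩ := exists_analyticAt_superposition (X := I) hΩ
  have hray0 : rayCLM 𝕜 E F 0 = ContinuousMap.const I 0 := map_zero _
  have hN0 : AnalyticAt 𝕜 N (rayCLM 𝕜 E F 0) := hray0 ▸ hN
  have hray : ∀ᶠ w in 𝓝 0, ∀ t : I, N (rayCLM 𝕜 E F w) t = η ((t : ℝ) • w.1, w.2 t) w.1 :=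
    ((rayCLM 𝕜 E F).continuous.tendsto' 0 _ hray0).eventually hNη
  refine ⟨fun w => w.2 - primitiveCLM 𝕜 (N (rayCLM 𝕜 E F w)), ?_, ?_, ?_⟩
  · exact analyticAt_snd.sub (((primitiveCLM 𝕜).analyticAt _).fun_comp
      (hN0.fun_comp ((rayCLM 𝕜 E F).analyticAt 0)))
  · filter_upwards [(Continuous.prodMk_right (0 : E)).continuousAt.eventually hray] with c hc
    have hNc : N (rayCLM 𝕜 E F (0, c)) = 0 := by
      ext t
      simpa using hc t
    simp [hNc]
  · filter_upwards [hray] with w hw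
    rw [sub_eq_zero, eq_primitiveCLM_iff]
    refine and_congr_right fun _ => forall₂_congr fun t ht => ?_
    rw [IccExtend_of_mem _ (N _) ht, IccExtend_of_mem _ w.2 ht, hw ⟨t, ht⟩]

variable [CompleteSpace E]

theorem exists_analyticAt_isLocalRayFlow (hη : AnalyticAt 𝕜 η 0) :
    ∃ ψ : E → C(I, F), AnalyticAt 𝕜 ψ 0 ∧ IsLocalRayFlow η ψ := by
  obtain ⟨R, hR, hR0, hRη⟩ := exists_analyticAt_rayEquation hη
  have hpartial : fderiv 𝕜 R 0 ∘L .inr 𝕜 E C(I, F) = .id 𝕜 C(I, F) := by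
    have hinr : HasFDerivAt (fun c => R (0, c)) (fderiv 𝕜 R 0 ∘L .inr 𝕜 E C(I, F)) 0 :=
      HasFDerivAt.comp (g := R) 0 hR.differentiableAt.hasFDerivAt
        (ContinuousLinearMap.inr 𝕜 E C(I, F)).hasFDerivAt
    exact hinr.unique ((hasFDerivAt_id 0).congr_of_eventuallyEq hR0)
  have hinv : (fderiv 𝕜 R 0 ∘L .inr 𝕜 E C(I, F)).IsInvertible :=
    hpartial ▸ ⟨.refl 𝕜 _, rfl⟩
  have hRω : ContDiffAt 𝕜 ω R 0 := hR.contDiffAt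
  have hiff : ∀ᶠ w : E × C(I, F) in 𝓝 0 ×ˢ 𝓝 0,
      IsRaySolution η w.1 (IccExtend zero_le_one w.2) ↔
        hRω.implicitFunction (by simp) hinv w.1 = w.2 := by
    rw [← nhds_prod_eq]
    filter_upwards [hRη, hRω.eventually_apply_eq_iff_implicitFunction (by simp) hinv] with w hw hψ
    rw [← hw, ← hψ, show R 0 = 0 from hR0.self_of_nhds]
  obtain ⟨_, hsmall, _, hnear, hiff⟩ := eventually_prod_iff.1 hiff
  obtain ⟨ε, hε, hball⟩ := Metric.eventually_nhds_iff_ball.1 hnear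
  exact ⟨hRω.implicitFunction (by simp) hinv,
    (hRω.contDiffAt_implicitFunction (by simp) hinv).analyticAt,
    hRω.implicitFunction_apply_self (by simp) hinv, ε, hε,
    hsmall.mono fun q hq c hc => hiff hq (hball c (mem_ball_zero_iff.2 hc))⟩

theorem exists_analyticAt_radialSolution (hη : AnalyticAt 𝕜 η 0) :
    ∃ u : E → F, AnalyticAt 𝕜 u 0 ∧ u 0 = 0 ∧
      (∀ᶠ q in 𝓝 0, IsRaySolution η q fun t => u (t • q)) ∧
      ∀ v : E → F, v 0 = 0 → (∀ᶠ q in 𝓝 0, HasFDerivAt v (η (q, v q)) q) → v =ᶠ[𝓝 0] u := by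
  obtain ⟨ψ, hψ, hflow⟩ := exists_analyticAt_isLocalRayFlow hη
  exact ⟨fun q => ψ q 1, ((ContinuousMap.evalCLM 𝕜 (1 : I)).analyticAt _).fun_comp hψ,
    by simp [hflow.1], hflow.eventually_isRaySolution hψ.continuousAt,
    fun _ => hflow.eventuallyEq_of_hasFDerivAt⟩

end RaySolution

section PfaffianDefect

variable {𝕜 E F : Type*} [NontriviallyNormedField 𝕜] [NormedAddCommGroup E] [NormedSpace 𝕜 E]
  [NormedAddCommGroup F] [NormedSpace 𝕜 F]

/-- The Frobenius integrability condition at `z` for `du = η (q, u)`: the second derivative of `u`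
obtained by differentiating the equation, with `η` substituted for `du`, is symmetric. -/
def FrobeniusCondition (η : E × F → E →L[𝕜] F) (z : E × F) : Prop :=
  ∀ v w, fderiv 𝕜 η z (v, η z v) w = fderiv 𝕜 η z (w, η z w) v

/-- The failure `du - η (·, u)` of `u` to solve the total differential equation defined by `η`. -/
noncomputable def pfaffianDefect (η : E × F → E →L[𝕜] F) (u : E → F) (q : E) : E →L[𝕜] F :=
  fderiv 𝕜 u q - η (q, u q)

variable {η : E × F → E →L[𝕜] F} {u : E → F} {q : E}

theorem hasFDerivAt_pfaffianDefect (hη : DifferentiableAt 𝕜 η (q, u q))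
    (hu : ContDiffAt 𝕜 2 u q) :
    HasFDerivAt (pfaffianDefect η u) (fderiv 𝕜 (fderiv 𝕜 u) q -
      fderiv 𝕜 η (q, u q) ∘L (ContinuousLinearMap.id 𝕜 E).prod (fderiv 𝕜 u q)) q := by
  have hdu : DifferentiableAt 𝕜 (fderiv 𝕜 u) q :=
    (hu.fderiv_right (m := 1) le_rfl).differentiableAt one_ne_zero
  have hgraph : HasFDerivAt (fun p => (p, u p))
      ((ContinuousLinearMap.id 𝕜 E).prod (fderiv 𝕜 u q)) q :=
    (hasFDerivAt_id q).prodMk (hu.differentiableAt two_ne_zero).hasFDerivAt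
  exact hdu.hasFDerivAt.sub (HasFDerivAt.comp (g := η) q hη.hasFDerivAt hgraph)

end PfaffianDefect

section Integrability

variable {𝕜 E F : Type*} [RCLike 𝕜] [NormedAddCommGroup E] [NormedSpace 𝕜 E]
  [NormedAddCommGroup F] [NormedSpace 𝕜 F] {η : E × F → E →L[𝕜] F} {u : E → F} {q : E}

theorem norm_apply_zero_prodMk_apply_le {L : E × F →L[𝕜] E →L[𝕜] F} {C : ℝ} (hL : ‖L‖ ≤ C)
    (q : E) (w : F) : ‖L (0, w) q‖ ≤ C * ‖q‖ * ‖w‖ := by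
  calc ‖L (0, w) q‖ ≤ ‖L (0, w)‖ * ‖q‖ := ContinuousLinearMap.le_opNorm _ _
    _ ≤ C * ‖((0 : E), w)‖ * ‖q‖ := by
      gcongr
      exact L.le_of_opNorm_le hL _
    _ = C * ‖q‖ * ‖w‖ := by
      simp only [Prod.norm_mk, norm_zero, norm_nonneg, sup_of_le_right]
      ring

theorem tendsto_prodMk_self_zero (hu : ContinuousAt u 0) (hu0 : u 0 = 0) :
    Tendsto (fun q => (q, u q)) (𝓝 0) (𝓝 0) := by
  simpa [hu0, ← Prod.zero_eq_mk] using (continuousAt_id.prodMk hu).tendsto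

/-- Differentiating `du q q = η (q, u q) q` in the direction `v`, the second-order term
`d²u q v q` is replaced by `d²u q q v` and the term in `dη` by its Frobenius transpose. -/
theorem pfaffianDefect_apply_add_fderiv_pfaffianDefect_apply
    (hη : DifferentiableAt 𝕜 η (q, u q)) (hu : ContDiffAt 𝕜 2 u q)
    (hfrob : FrobeniusCondition η (q, u q)) (hrad : ∀ᶠ p in 𝓝 q, pfaffianDefect η u p p = 0)
    (v : E) :
    pfaffianDefect η u q v + fderiv 𝕜 (pfaffianDefect η u) q q v =
      fderiv 𝕜 η (q, u q) (0, pfaffianDefect η u q v) q := by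
  have hA := hasFDerivAt_pfaffianDefect hη hu
  have hprod : pfaffianDefect η u q v + fderiv 𝕜 (pfaffianDefect η u) q v q = 0 := by
    have hconst : HasFDerivAt (fun p => pfaffianDefect η u p p) (0 : E →L[𝕜] F) q :=
      (hasFDerivAt_const (0 : F) q).congr_of_eventuallyEq hrad
    simpa [hA.fderiv] using congr($((hA.clm_apply (hasFDerivAt_id q)).unique hconst) v)
  have hsymm : fderiv 𝕜 (fderiv 𝕜 u) q q v = fderiv 𝕜 (fderiv 𝕜 u) q v q :=
    hu.isSymmSndFDerivAt (by simp) q v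
  have hduq : fderiv 𝕜 u q q = η (q, u q) q := sub_eq_zero.1 hrad.self_of_nhds
  have hsplit : ((0 : E), pfaffianDefect η u q v) =
      (v, fderiv 𝕜 u q v) - (v, η (q, u q) v) := by
    simp [pfaffianDefect]
  rw [hA.fderiv] at hprod ⊢
  simp only [sub_apply, ContinuousLinearMap.comp_apply, ContinuousLinearMap.prod_apply,
    ContinuousLinearMap.id_apply] at hprod ⊢
  rw [hsplit, map_sub, sub_apply, hduq, hsymm, hfrob q v, ← sub_eq_zero, ← hprod]
  abel

variable [NormedSpace ℝ E] [NormedSpace ℝ F] [IsScalarTower ℝ 𝕜 E] [IsScalarTower ℝ 𝕜 F]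

theorem hasDerivAt_smul_pfaffianDefect {t : ℝ}
    (hη : DifferentiableAt 𝕜 η (t • q, u (t • q))) (hu : ContDiffAt 𝕜 2 u (t • q))
    (hfrob : FrobeniusCondition η (t • q, u (t • q)))
    (hrad : ∀ᶠ p in 𝓝 (t • q), pfaffianDefect η u p p = 0) (v : E) :
    HasDerivAt (fun s : ℝ => s • pfaffianDefect η u (s • q) v)
      (fderiv 𝕜 η (t • q, u (t • q)) (0, t • pfaffianDefect η u (t • q) v) q) t := by
  have hA := (hasFDerivAt_pfaffianDefect hη hu).differentiableAt.hasFDerivAt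
  have hAv : HasDerivAt (fun s : ℝ => pfaffianDefect η u (s • q) v)
      (fderiv 𝕜 (pfaffianDefect η u) (t • q) q v) t := by
    simpa using hasDerivAt_comp_smul (hA.clm_apply (hasFDerivAt_const v (t • q)))
  have hprod : HasDerivAt (fun s : ℝ => s • pfaffianDefect η u (s • q) v)
      (pfaffianDefect η u (t • q) v + t • fderiv 𝕜 (pfaffianDefect η u) (t • q) q v) t := by
    simpa [add_comm] using (hasDerivAt_id t).fun_smul hAv
  have hvalue : fderiv 𝕜 η (t • q, u (t • q)) (0, t • pfaffianDefect η u (t • q) v) q =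
      pfaffianDefect η u (t • q) v + t • fderiv 𝕜 (pfaffianDefect η u) (t • q) q v := by
    have hdefect :=
      pfaffianDefect_apply_add_fderiv_pfaffianDefect_apply hη hu hfrob hrad v
    have hzero : ((0 : E), t • pfaffianDefect η u (t • q) v) =
        t • ((0 : E), pfaffianDefect η u (t • q) v) := by simp
    rw [hzero, ContinuousLinearMap.map_smul_of_tower, smul_apply,
      ← ContinuousLinearMap.map_smul_of_tower, ← hdefect,
      ContinuousLinearMap.map_smul_of_tower, smul_apply]
  exact hvalue ▸ hprod

theorem IsRaySolution.fderiv_apply_self (h : IsRaySolution η q fun t => u (t • q))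
    (hu : DifferentiableAt 𝕜 u q) : fderiv 𝕜 u q q = η (q, u q) q := by
  have hderiv : HasDerivAt (fun t : ℝ => u (t • q)) (fderiv 𝕜 u q q) 1 :=
    hasDerivAt_comp_smul (by simpa using hu.hasFDerivAt)
  simpa using (uniqueDiffOn_Icc zero_lt_one 1 unitInterval.one_mem).eq_deriv _
    hderiv.hasDerivWithinAt (h.2 1 unitInterval.one_mem)

theorem eventually_forall_hasDerivAt_smul_pfaffianDefect (hη : ContDiffAt 𝕜 1 η 0)
    (hfrob : ∀ᶠ z in 𝓝 0, FrobeniusCondition η z) (hu : ContDiffAt 𝕜 2 u 0) (hu0 : u 0 = 0)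
    (hrad : ∀ᶠ q in 𝓝 0, pfaffianDefect η u q q = 0) :
    ∀ᶠ q in 𝓝 0, ∀ t ∈ I, ∀ v,
      HasDerivAt (fun s : ℝ => s • pfaffianDefect η u (s • q) v)
        (fderiv 𝕜 η (t • q, u (t • q)) (0, t • pfaffianDefect η u (t • q) v) q) t := by
  have hgraph := tendsto_prodMk_self_zero hu.continuousAt hu0
  filter_upwards [eventually_forall_smul_of_eventually (hu.eventually (by simp)),
    eventually_forall_smul_of_eventually (hgraph.eventually (hη.eventually (by simp))),
    eventually_forall_smul_of_eventually (hgraph.eventually hfrob),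
    eventually_forall_smul_of_eventually hrad.eventually_nhds] with q huq hηq hfrobq hradq t ht
  exact hasDerivAt_smul_pfaffianDefect ((hηq t ht).differentiableAt one_ne_zero) (huq t ht)
    (hfrobq t ht) (hradq t ht)

theorem eventually_hasFDerivAt_of_radial (hη : ContDiffAt 𝕜 1 η 0)
    (hfrob : ∀ᶠ z in 𝓝 0, FrobeniusCondition η z) (hu : ContDiffAt 𝕜 2 u 0) (hu0 : u 0 = 0)
    (hrad : ∀ᶠ q in 𝓝 0, fderiv 𝕜 u q q = η (q, u q) q) :
    ∀ᶠ q in 𝓝 0, HasFDerivAt u (η (q, u q)) q := by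
  have hderiv := eventually_forall_hasDerivAt_smul_pfaffianDefect hη hfrob hu hu0
    (hrad.mono fun q hq => sub_eq_zero.2 hq)
  have hbound : ∀ᶠ q in 𝓝 0, ‖fderiv 𝕜 η (q, u q)‖ < ‖fderiv 𝕜 η 0‖ + 1 :=
    (tendsto_prodMk_self_zero hu.continuousAt hu0).eventually
      ((hη.continuousAt_fderiv one_ne_zero).norm.eventually_lt_const (lt_add_one _))
  filter_upwards [hderiv, eventually_forall_smul_of_eventually hbound,
    hu.eventually (by simp)] with q hq hboundq huq
  have hzero : ∀ v, pfaffianDefect η u q v = 0 := by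
    intro v
    have hgronwall := eq_zero_of_abs_deriv_le_mul_abs_self_of_eq_zero_right
      (fun t ht => (hq t ht v).continuousAt.continuousWithinAt)
      (fun t ht => (hq t (Ico_subset_Icc_self ht) v).hasDerivWithinAt) (by simp)
      (fun t ht => norm_apply_zero_prodMk_apply_le (hboundq t (Ico_subset_Icc_self ht)).le q _)
      1 unitInterval.one_mem
    simpa using hgronwall
  have hdu : fderiv 𝕜 u q = η (q, u q) := sub_eq_zero.1 (ContinuousLinearMap.ext hzero)
  exact hdu ▸ (huq.differentiableAt two_ne_zero).hasFDerivAt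

end Integrability

section Frobenius

variable {𝕜 E F : Type*} [RCLike 𝕜] [NormedAddCommGroup E] [NormedSpace 𝕜 E] [CompleteSpace E]
  [NormedAddCommGroup F] [NormedSpace 𝕜 F] [CompleteSpace F] {η : E × F → E →L[𝕜] F}

theorem exists_analyticAt_hasFDerivAt_zero (hη : AnalyticAt 𝕜 η 0)
    (hfrob : ∀ᶠ z in 𝓝 0, FrobeniusCondition η z) :
    ∃ u : E → F, AnalyticAt 𝕜 u 0 ∧ u 0 = 0 ∧
      (∀ᶠ q in 𝓝 0, HasFDerivAt u (η (q, u q)) q) ∧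
      ∀ v : E → F, v 0 = 0 → (∀ᶠ q in 𝓝 0, HasFDerivAt v (η (q, v q)) q) → v =ᶠ[𝓝 0] u := by
  let _ : NormedSpace ℝ E := .restrictScalars ℝ 𝕜 E
  let _ : NormedSpace ℝ F := .restrictScalars ℝ 𝕜 F
  have _ : IsScalarTower ℝ 𝕜 E := .restrictScalars ℝ 𝕜 E
  have _ : IsScalarTower ℝ 𝕜 F := .restrictScalars ℝ 𝕜 F
  obtain ⟨u, hu, hu0, hray, huniq⟩ := exists_analyticAt_radialSolution hη
  have hrad : ∀ᶠ q in 𝓝 0, fderiv 𝕜 u q q = η (q, u q) q := by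
    filter_upwards [hray, hu.eventually_analyticAt] with q hq huq
    exact hq.fderiv_apply_self huq.differentiableAt
  exact ⟨u, hu, hu0, eventually_hasFDerivAt_of_radial hη.contDiffAt hfrob hu.contDiffAt hu0 hrad,
    huniq⟩

theorem exists_analyticAt_hasFDerivAt {q₀ : E} {u₀ : F} (hη : AnalyticAt 𝕜 η (q₀, u₀))
    (hfrob : ∀ᶠ z in 𝓝 (q₀, u₀), FrobeniusCondition η z) :
    ∃ u : E → F, AnalyticAt 𝕜 u q₀ ∧ u q₀ = u₀ ∧
      (∀ᶠ q in 𝓝 q₀, HasFDerivAt u (η (q, u q)) q) ∧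
      ∀ v : E → F, v q₀ = u₀ → (∀ᶠ q in 𝓝 q₀, HasFDerivAt v (η (q, v q)) q) →
        v =ᶠ[𝓝 q₀] u := by
  have hshift : Tendsto (fun z : E × F => z + (q₀, u₀)) (𝓝 0) (𝓝 (q₀, u₀)) :=
    (continuous_add_const (q₀, u₀)).tendsto' _ _ (zero_add _)
  have hsub : Tendsto (fun q : E => q - q₀) (𝓝 q₀) (𝓝 0) :=
    (continuous_sub_right q₀).tendsto' _ _ (sub_self _)
  have hadd : Tendsto (fun q : E => q + q₀) (𝓝 0) (𝓝 q₀) :=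
    (continuous_add_const q₀).tendsto' _ _ (zero_add _)
  have hη' : AnalyticAt 𝕜 (fun z => η (z + (q₀, u₀))) 0 :=
    AnalyticAt.fun_comp (g := η) (f := fun z => z + (q₀, u₀)) (by simpa using hη)
      (analyticAt_id.add analyticAt_const)
  have hfrob' : ∀ᶠ z in 𝓝 0, FrobeniusCondition (fun z => η (z + (q₀, u₀))) z := by
    filter_upwards [hshift.eventually hfrob] with z hz v w
    simpa [fderiv_comp_add_right] using hz v w
  obtain ⟨u, hu, hu0, hdu, huniq⟩ := exists_analyticAt_hasFDerivAt_zero hη' hfrob'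
  refine ⟨fun q => u (q - q₀) + u₀, ?_, by simp [hu0], ?_, fun v hv0 hdv => ?_⟩
  · exact (AnalyticAt.fun_comp (g := u) (f := fun q => q - q₀) (by simpa using hu)
      (analyticAt_id.sub analyticAt_const)).add analyticAt_const
  · filter_upwards [hsub.eventually hdu] with q hq
    simpa using ((hasFDerivAt_comp_sub q₀).2 hq).add_const u₀
  · have hv : (fun q => v (q + q₀) - u₀) =ᶠ[𝓝 0] u := by
      refine huniq _ (by simp [hv0]) ?_
      filter_upwards [hadd.eventually hdv] with q hq
      simpa using ((hasFDerivAt_comp_add_right q₀).2 hq).sub_const u₀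
    filter_upwards [hsub.eventually hv] with q hq
    simpa [sub_eq_iff_eq_add] using hq

end Frobenius

section Planar

variable {𝕜 F : Type*} [NontriviallyNormedField 𝕜] [NormedAddCommGroup F] [NormedSpace 𝕜 F]

variable (𝕜 F) in
/-- The form `a dx + b dy` on the plane, as a linear function of its coefficients `(a, b)`. -/
noncomputable def planarForm : F × F →L[𝕜] 𝕜 × 𝕜 →L[𝕜] F :=
  (ContinuousLinearMap.smulRightL 𝕜 (𝕜 × 𝕜) F (.fst 𝕜 𝕜 𝕜)).coprod
    (ContinuousLinearMap.smulRightL 𝕜 (𝕜 × 𝕜) F (.snd 𝕜 𝕜 𝕜))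

@[simp]
theorem planarForm_apply (a : F × F) (v : 𝕜 × 𝕜) :
    planarForm 𝕜 F a v = v.1 • a.1 + v.2 • a.2 := rfl

theorem hasFDerivAt_planarForm_iff {u : 𝕜 × 𝕜 → F} {p : 𝕜 × 𝕜} {a b : F} :
    HasFDerivAt u (planarForm 𝕜 F (a, b)) p ↔ DifferentiableAt 𝕜 u p ∧
      deriv (fun t => u (t, p.2)) p.1 = a ∧ deriv (fun t => u (p.1, t)) p.2 = b := by
  have hpartial : ∀ {u' : 𝕜 × 𝕜 →L[𝕜] F}, HasFDerivAt u u' p →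
      deriv (fun t => u (t, p.2)) p.1 = u' (1, 0) ∧
        deriv (fun t => u (p.1, t)) p.2 = u' (0, 1) := fun hu =>
    ⟨(hu.comp_hasDerivAt p.1 ((hasDerivAt_id p.1).prodMk (hasDerivAt_const p.1 p.2))).deriv,
      (hu.comp_hasDerivAt p.2 ((hasDerivAt_const p.2 p.1).prodMk (hasDerivAt_id p.2))).deriv⟩
  constructor
  · intro hu
    exact ⟨hu.differentiableAt, by simpa using hpartial hu⟩
  · rintro ⟨hu, rfl, rfl⟩
    obtain ⟨h₁, h₂⟩ := hpartial hu.hasFDerivAt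
    have hform : planarForm 𝕜 F (deriv (fun t => u (t, p.2)) p.1,
        deriv (fun t => u (p.1, t)) p.2) = fderiv 𝕜 u p := by
      ext <;> simp [h₁, h₂]
    exact hform ▸ hu.hasFDerivAt

theorem fderiv_curried_apply {G : Type*} [NormedAddCommGroup G] [NormedSpace 𝕜 G]
    {h : 𝕜 → 𝕜 → F → G} {z : (𝕜 × 𝕜) × F}
    (hh : DifferentiableAt 𝕜 (fun z : (𝕜 × 𝕜) × F => h z.1.1 z.1.2 z.2) z)
    (v : 𝕜 × 𝕜) (w : F) :
    fderiv 𝕜 (fun z : (𝕜 × 𝕜) × F => h z.1.1 z.1.2 z.2) z (v, w) =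
      v.1 • deriv (fun t => h t z.1.2 z.2) z.1.1 + v.2 • deriv (fun t => h z.1.1 t z.2) z.1.2 +
        fderiv 𝕜 (h z.1.1 z.1.2) z.2 w := by
  have hplane : HasFDerivAt (fun p : 𝕜 × 𝕜 => h p.1 p.2 z.2) _ z.1 :=
    HasFDerivAt.comp (f := fun p => (p, z.2)) z.1 hh.hasFDerivAt (hasFDerivAt_prodMk_left z.1 z.2)
  have hfiber : HasFDerivAt (h z.1.1 z.1.2) _ z.2 :=
    HasFDerivAt.comp (f := fun w => (z.1, w)) z.2 hh.hasFDerivAt (hasFDerivAt_prodMk_right z.1 z.2)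
  have hform := hasFDerivAt_planarForm_iff.2 ⟨hplane.differentiableAt, rfl, rfl⟩
  have hv := congr($(hplane.unique hform) v)
  rw [hfiber.fderiv, ← Prod.fst_add_snd (v, w), map_add]
  congr 1

/-- `D₂ f = D₁ g`, where `D₁ = ∂₁ + f ∂ᵤ` and `D₂ = ∂₂ + g ∂ᵤ` are the derivatives along
`((1, 0), f z)` and `((0, 1), g z)`. -/
theorem frobeniusCondition_planarForm_iff {f g : (𝕜 × 𝕜) × F → F} {z : (𝕜 × 𝕜) × F}
    (hf : DifferentiableAt 𝕜 f z) (hg : DifferentiableAt 𝕜 g z) :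
    FrobeniusCondition (fun z => planarForm 𝕜 F (f z, g z)) z ↔
      fderiv 𝕜 f z ((0, 1), g z) = fderiv 𝕜 g z ((1, 0), f z) := by
  have hlift : ∀ v : 𝕜 × 𝕜, (v, v.1 • f z + v.2 • g z) =
      v.1 • ((1, 0), f z) + v.2 • ((0, 1), g z) := by
    intro v
    ext <;> simp
  have hderiv : fderiv 𝕜 (fun z => planarForm 𝕜 F (f z, g z)) z =
      planarForm 𝕜 F ∘L (fderiv 𝕜 f z).prod (fderiv 𝕜 g z) :=
    ((planarForm 𝕜 F).hasFDerivAt.comp z (hf.hasFDerivAt.prodMk hg.hasFDerivAt)).fderiv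
  constructor
  · intro h
    simpa [hderiv] using h (0, 1) (1, 0)
  · intro h v w
    simp only [hlift, hderiv, ContinuousLinearMap.comp_apply, ContinuousLinearMap.prod_apply,
      planarForm_apply, map_add, map_smul, add_apply, smul_apply, h]
    module

end Planar

theorem analytic_frobenius_general {𝕜 F : Type*} [RCLike 𝕜] [NormedAddCommGroup F]
    [NormedSpace 𝕜 F] [CompleteSpace F] (f g : 𝕜 → 𝕜 → F → F) (a b : 𝕜) (c : F)
    (hf : AnalyticAt 𝕜 (fun p : 𝕜 × 𝕜 × F => f p.1 p.2.1 p.2.2) (a, b, c))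
    (hg : AnalyticAt 𝕜 (fun p : 𝕜 × 𝕜 × F => g p.1 p.2.1 p.2.2) (a, b, c))
    (hcomp : ∀ᶠ p : 𝕜 × 𝕜 × F in 𝓝 (a, b, c),
      deriv (fun t => f p.1 t p.2.2) p.2.1 +
          fderiv 𝕜 (f p.1 p.2.1) p.2.2 (g p.1 p.2.1 p.2.2) =
        deriv (fun t => g t p.2.1 p.2.2) p.1 +
          fderiv 𝕜 (g p.1 p.2.1) p.2.2 (f p.1 p.2.1 p.2.2)) :
    ∃ u : 𝕜 → 𝕜 → F, AnalyticAt 𝕜 (fun p : 𝕜 × 𝕜 => u p.1 p.2) (a, b) ∧ u a b = c ∧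
      (∀ᶠ p : 𝕜 × 𝕜 in 𝓝 (a, b), deriv (fun t => u t p.2) p.1 = f p.1 p.2 (u p.1 p.2) ∧
        deriv (fun t => u p.1 t) p.2 = g p.1 p.2 (u p.1 p.2)) ∧
      ∀ v : 𝕜 → 𝕜 → F, (∀ᶠ p : 𝕜 × 𝕜 in 𝓝 (a, b), DifferentiableAt 𝕜 (fun p => v p.1 p.2) p) →
        v a b = c →
        (∀ᶠ p : 𝕜 × 𝕜 in 𝓝 (a, b), deriv (fun t => v t p.2) p.1 = f p.1 p.2 (v p.1 p.2) ∧
          deriv (fun t => v p.1 t) p.2 = g p.1 p.2 (v p.1 p.2)) →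
        ∀ᶠ p : 𝕜 × 𝕜 in 𝓝 (a, b), v p.1 p.2 = u p.1 p.2 := by
  have hassoc : AnalyticAt 𝕜 (fun z : (𝕜 × 𝕜) × F => (z.1.1, z.1.2, z.2)) ((a, b), c) :=
    (ContinuousLinearEquiv.prodAssoc 𝕜 𝕜 𝕜 F).toContinuousLinearMap.analyticAt _
  have hf' : AnalyticAt 𝕜 (fun z : (𝕜 × 𝕜) × F => f z.1.1 z.1.2 z.2) ((a, b), c) :=
    hf.fun_comp_of_eq hassoc rfl
  have hg' : AnalyticAt 𝕜 (fun z : (𝕜 × 𝕜) × F => g z.1.1 z.1.2 z.2) ((a, b), c) :=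
    hg.fun_comp_of_eq hassoc rfl
  have hη := ((planarForm 𝕜 F).analyticAt _).fun_comp (hf'.prod hg')
  have hfrob : ∀ᶠ z in 𝓝 ((a, b), c), FrobeniusCondition
      (fun z : (𝕜 × 𝕜) × F => planarForm 𝕜 F (f z.1.1 z.1.2 z.2, g z.1.1 z.1.2 z.2)) z := by
    filter_upwards [hassoc.continuousAt.eventually hcomp, hf'.eventually_analyticAt,
      hg'.eventually_analyticAt] with z hz hfz hgz
    rw [frobeniusCondition_planarForm_iff hfz.differentiableAt hgz.differentiableAt,
      fderiv_curried_apply hfz.differentiableAt, fderiv_curried_apply hgz.differentiableAt]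
    simpa using hz
  obtain ⟨u, hu, hu0, hdu, huniq⟩ := exists_analyticAt_hasFDerivAt hη hfrob
  refine ⟨fun x y => u (x, y), hu, hu0,
    hdu.mono fun p hp => (hasFDerivAt_planarForm_iff.1 hp).2, fun v hv hv0 hdv => ?_⟩
  refine huniq (fun p => v p.1 p.2) hv0 ?_
  filter_upwards [hv, hdv] with p hvp hdvp
  exact hasFDerivAt_planarForm_iff.2 ⟨hvp, hdvp⟩

/-- Frobenius-type theorem: if f, g are analytic near the origin and satisfy the
compatibility condition D₂f = D₁g with D₁ = ∂₁ + f·∂ᵤ and D₂ = ∂₂ + g·∂ᵤ, then the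
system ∂₁u = f(x₁,x₂,u), ∂₂u = g(x₁,x₂,u) has a unique analytic solution near (0,0)
with u(0,0) = 0. -/
theorem analytic_frobenius (f g : ℝ → ℝ → ℝ → ℝ)
    (hf : AnalyticAt ℝ (fun p : ℝ × ℝ × ℝ => f p.1 p.2.1 p.2.2) (0, 0, 0))
    (hg : AnalyticAt ℝ (fun p : ℝ × ℝ × ℝ => g p.1 p.2.1 p.2.2) (0, 0, 0))
    (hcomp : ∀ᶠ p : ℝ × ℝ × ℝ in nhds (0, 0, 0),
      D2 f p.1 p.2.1 p.2.2 + g p.1 p.2.1 p.2.2 * Du f p.1 p.2.1 p.2.2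
        = D1 g p.1 p.2.1 p.2.2 + f p.1 p.2.1 p.2.2 * Du g p.1 p.2.1 p.2.2) :
    ∃ u : ℝ → ℝ → ℝ,
      AnalyticAt ℝ (fun p : ℝ × ℝ => u p.1 p.2) (0, 0) ∧
      u 0 0 = 0 ∧
      (∀ᶠ p : ℝ × ℝ in nhds (0, 0),
        d1 u p.1 p.2 = f p.1 p.2 (u p.1 p.2) ∧ d2 u p.1 p.2 = g p.1 p.2 (u p.1 p.2)) ∧
      ∀ v : ℝ → ℝ → ℝ,
        AnalyticAt ℝ (fun p : ℝ × ℝ => v p.1 p.2) (0, 0) →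
        v 0 0 = 0 →
        (∀ᶠ p : ℝ × ℝ in nhds (0, 0),
          d1 v p.1 p.2 = f p.1 p.2 (v p.1 p.2) ∧ d2 v p.1 p.2 = g p.1 p.2 (v p.1 p.2)) →
        ∀ᶠ p : ℝ × ℝ in nhds (0, 0), v p.1 p.2 = u p.1 p.2 := by
  obtain ⟨u, hu, hu0, hdu, huniq⟩ := analytic_frobenius_general f g 0 0 0 hf hg <|
    hcomp.mono fun p hp => by simpa [D1, D2, Du, fderiv_eq_smul_deriv] using hp
  exact ⟨u, hu, hu0, hdu, fun v hv =>
    huniq v (hv.eventually_analyticAt.mono fun _ h => h.differentiableAt)⟩
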